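/- For every integer n ≥ 1, the number of triples (a_1, a_2, a_3) of nonnegative integers with a_1 + a_2 + a_3 = 2n and N(a_1, a_2, a_3) ≠ 0 equals C(n+2, 2), where C denotes the binomial coefficient. -/

import Mathlib

/-- A word (list over `ℕ`) is down-up alternating if `w 1 > w 2 < w 3 > w 4 < ⋯`
(1-indexed). -/
def DownUpAlt (w : List ℕ) : Prop :=
  ∀ k : ℕ, k + 1 < w.length →
    if k % 2 = 0 then w.getD (k + 1) 0 < w.getD k 0 else w.getD k 0 < w.getD (k + 1) 0

/-- `N3 a b c` is the number of down-up alternating words over `{1,2,3}` that are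
empty or have first letter `≥ 2`, containing exactly `a` ones, `b` twos and
`c` threes. -/
noncomputable def N3 (a b c : ℕ) : ℕ :=
  Nat.card {w : List ℕ // (∀ x ∈ w, 1 ≤ x ∧ x ≤ 3) ∧ DownUpAlt w ∧
    (w = [] ∨ 2 ≤ w.headI) ∧
    w.count 1 = a ∧ w.count 2 = b ∧ w.count 3 = c}

/-!
The letters in positions `2i - 1` and `2i` of an alternating word differ, so a letter occurs at most
`n` times in such a word of length `2n`. Conversely, let `s₁ ≤ ⋯ ≤ s₂ₙ` be letters, each repeated
at most `n` times. Then `sᵢ < sₙ₊ᵢ ≤ sₙ₊ᵢ₊₁`, so `sₙ₊₁ s₁ sₙ₊₂ s₂ ⋯ s₂ₙ sₙ` is down-up alternating.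
Hence the triples to be counted are those with sum `2n` and all entries at most `n`, and
`(a, b, c) ↦ (n - a, n - b, n - c)` turns them into the triples with sum `n`.
-/

lemma downUpAlt_cons_cons {a b : ℕ} {w : List ℕ} :
    DownUpAlt (a :: b :: w) ↔ b < a ∧ (∀ c ∈ w.head?, b < c) ∧ DownUpAlt w := by
  constructor
  · intro h
    refine ⟨by simpa using h 0 (by simp), ?_, fun k hk => ?_⟩
    · cases w with
      | nil => simp
      | cons c w => simpa using h 1 (by simp)
    · simpa [Nat.add_mod_right] using h (k + 2) (Nat.add_lt_add_right hk 2)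
  · rintro ⟨hba, hbw, hw⟩ k hk
    match k with
    | 0 => simpa using hba
    | 1 =>
      cases w with
      | nil => simp at hk
      | cons c w => simpa using hbw
    | k + 2 => simpa [Nat.add_mod_right] using hw k (Nat.lt_of_add_lt_add_right (n := 2) hk)

lemma DownUpAlt.two_mul_count_le (x : ℕ) :
    ∀ {w : List ℕ}, DownUpAlt w → 2 * w.count x ≤ w.length + 1
  | [], _ => by simp
  | [a], _ => by
    have := List.count_le_length (a := x) (l := [a])
    simp only [List.length_singleton] at this ⊢
    omega
  | a :: b :: w, h => by
    obtain ⟨hba, -, hw⟩ := downUpAlt_cons_cons.1 h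
    have := hw.two_mul_count_le x
    simp only [List.count_cons, beq_iff_eq, List.length_cons]
    split_ifs <;> omega

lemma DownUpAlt.eq_nil_or_two_le_headI {w : List ℕ} (h : DownUpAlt w) (hlen : w.length ≠ 1)
    (hpos : ∀ x ∈ w, 1 ≤ x) : w = [] ∨ 2 ≤ w.headI := by
  match w with
  | [] => exact .inl rfl
  | [a] => exact absurd rfl hlen
  | a :: b :: w =>
    have hba : b < a := (downUpAlt_cons_cons.1 h).1
    have hb : 1 ≤ b := hpos b (by simp)
    exact .inr (Nat.succ_le_of_lt (hb.trans_lt hba))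

/-- The word `p₁ q₁ p₂ q₂ ⋯` spelled out by a list of pairs `(p₁, q₁), (p₂, q₂), …`. It is used to
assemble alternating words from their descents. -/
def pairWord {α : Type*} (ps : List (α × α)) : List α :=
  ps.flatMap fun p => [p.1, p.2]

lemma pairWord_zip_perm {α : Type*} :
    ∀ {u v : List α}, u.length = v.length → (pairWord (u.zip v)).Perm (u ++ v)
  | [], [], _ => .nil
  | a :: u, b :: v, h =>
    have ih : (pairWord (u.zip v)).Perm (u ++ v) := pairWord_zip_perm (Nat.succ.inj h)
    ((ih.cons b).trans List.perm_middle.symm).cons a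

lemma downUpAlt_pairWord {ps : List (ℕ × ℕ)} (hdesc : ∀ p ∈ ps, p.2 < p.1)
    (hsorted : ps.Pairwise fun p q => p.1 ≤ q.1) : DownUpAlt (pairWord ps) := by
  induction ps with
  | nil => simp [DownUpAlt, pairWord]
  | cons p ps ih =>
    obtain ⟨hp, hps⟩ := List.forall_mem_cons.1 hdesc
    obtain ⟨hle, hsorted⟩ := List.pairwise_cons.1 hsorted
    refine downUpAlt_cons_cons.2 ⟨hp, fun c hc => ?_, ih hps hsorted⟩
    cases ps with
    | nil => simp at hc
    | cons q ps =>
      obtain rfl : q.1 = c := by simpa using hc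
      exact hp.trans_le (hle q (by simp))

lemma getElem_lt_getElem_add_of_count_le {α : Type*} [LinearOrder α] {s : List α} {n i : ℕ}
    (hs : s.SortedLE) (hcount : ∀ x, s.count x ≤ n) (hi : n + i < s.length) :
    s[i] < s[n + i] := by
  by_contra! hle
  have hmono {j k : ℕ} (hk : k < s.length) (hjk : j ≤ k) : s[j] ≤ s[k] :=
    hs.getElem_le_getElem_of_le hjk
  have hconst : (s.drop i).take (n + 1) = List.replicate (n + 1) s[i] := by
    refine List.ext_getElem (by simp; omega) fun j hj _ => ?_
    simp only [List.length_take, List.length_drop, lt_inf_iff] at hj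
    simp only [List.getElem_take, List.getElem_drop, List.getElem_replicate]
    exact ((hmono (by omega) (by omega)).trans hle).antisymm (hmono (by omega) (by omega))
  have hsub : (List.replicate (n + 1) s[i]).Sublist s :=
    hconst ▸ (List.take_sublist _ _).trans (List.drop_sublist _ _)
  exact absurd (List.replicate_sublist_iff.1 hsub) (by have := hcount s[i]; omega)

lemma exists_perm_downUpAlt_of_count_le {n : ℕ} {l : List ℕ} (hl : l.length = 2 * n)
    (hcount : ∀ x, l.count x ≤ n) : ∃ w : List ℕ, w.Perm l ∧ DownUpAlt w := by
  set s : List ℕ := l.mergeSort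
  have hperm : s.Perm l := l.mergeSort_perm _
  have hs : s.SortedLE := l.sortedLE_mergeSort
  have hlen : s.length = 2 * n := hperm.length_eq.trans hl
  refine ⟨pairWord ((s.drop n).zip (s.take n)), ?_, downUpAlt_pairWord ?_ ?_⟩
  · calc pairWord ((s.drop n).zip (s.take n))
      _ |>.Perm (s.drop n ++ s.take n) := pairWord_zip_perm (by simp; omega)
      _ |>.Perm (s.take n ++ s.drop n) := List.perm_append_comm
      _ = s := List.take_append_drop n s
      _ |>.Perm l := hperm
  · refine List.forall_mem_iff_getElem.2 fun i hi => ?_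
    simp only [List.length_zip, List.length_drop, List.length_take, lt_inf_iff] at hi
    simpa only [List.getElem_zip, List.getElem_take, List.getElem_drop] using
      getElem_lt_getElem_add_of_count_le hs (fun x => hperm.count_eq x ▸ hcount x) (by omega)
  · refine List.pairwise_iff_getElem.2 fun i j _ _ hij => ?_
    simpa only [List.getElem_zip, List.getElem_drop] using
      hs.getElem_le_getElem_of_le (Nat.add_le_add_left hij.le n)

theorem exists_perm_downUpAlt_iff {n : ℕ} {l : List ℕ} (hl : l.length = 2 * n) :
    (∃ w : List ℕ, w.Perm l ∧ DownUpAlt w) ↔ ∀ x, l.count x ≤ n := by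
  refine ⟨?_, exists_perm_downUpAlt_of_count_le hl⟩
  rintro ⟨w, hperm, hw⟩ x
  have := hw.two_mul_count_le x
  rw [hperm.count_eq, hperm.length_eq, hl] at this
  omega

/-- The nondecreasing word with `a` ones, `b` twos and `c` threes. The words counted by `N3 a b c`
are encoded as its rearrangements. -/
def sortedWord (a b c : ℕ) : List ℕ :=
  List.replicate a 1 ++ List.replicate b 2 ++ List.replicate c 3

lemma perm_sortedWord_iff {a b c : ℕ} {w : List ℕ} :
    w.Perm (sortedWord a b c) ↔ (∀ x ∈ w, 1 ≤ x ∧ x ≤ 3) ∧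
      w.count 1 = a ∧ w.count 2 = b ∧ w.count 3 = c := by
  constructor
  · intro h
    refine ⟨fun x hx => ?_, ?_⟩
    · have := h.mem_iff.1 hx
      simp only [sortedWord, List.mem_append, List.mem_replicate] at this
      omega
    · simp [h.count_eq, sortedWord, List.count_replicate]
  · rintro ⟨hw, rfl, rfl, rfl⟩
    refine List.perm_iff_count.2 fun x => ?_
    by_cases hx : x ∈ w
    · obtain ⟨hx₁, hx₃⟩ := hw x hx
      interval_cases x <;> simp [sortedWord, List.count_replicate]
    · have h_zero : w.count x = 0 := List.count_eq_zero.2 hx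
      simp only [sortedWord, List.count_append, List.count_replicate, beq_iff_eq]
      split_ifs <;> subst_vars <;> omega

lemma N3_ne_zero_iff_exists_perm {a b c : ℕ} : N3 a b c ≠ 0 ↔
    ∃ w : List ℕ, w.Perm (sortedWord a b c) ∧ DownUpAlt w ∧ (w = [] ∨ 2 ≤ w.headI) := by
  have hperm (w : List ℕ) : ((∀ x ∈ w, 1 ≤ x ∧ x ≤ 3) ∧ DownUpAlt w ∧ (w = [] ∨ 2 ≤ w.headI) ∧
      w.count 1 = a ∧ w.count 2 = b ∧ w.count 3 = c) ↔
      w.Perm (sortedWord a b c) ∧ DownUpAlt w ∧ (w = [] ∨ 2 ≤ w.headI) := by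
    rw [perm_sortedWord_iff]
    tauto
  have hfin : {w : List ℕ | w.Perm (sortedWord a b c) ∧ DownUpAlt w ∧
      (w = [] ∨ 2 ≤ w.headI)}.Finite :=
    (List.finite_toSet (sortedWord a b c).permutations).subset fun w hw =>
      List.mem_permutations.2 hw.1
  simp only [N3, hperm, Nat.card_ne_zero, nonempty_subtype]
  exact and_iff_left hfin.to_subtype

theorem N3_ne_zero_iff {n a b c : ℕ} (h : a + b + c = 2 * n) :
    N3 a b c ≠ 0 ↔ a ≤ n ∧ b ≤ n ∧ c ≤ n := by
  have hlen : (sortedWord a b c).length = 2 * n := by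
    simpa [sortedWord, Nat.add_assoc] using h
  have hhead {w : List ℕ} (hperm : w.Perm (sortedWord a b c)) (hw : DownUpAlt w) :
      w = [] ∨ 2 ≤ w.headI :=
    hw.eq_nil_or_two_le_headI (by rw [hperm.length_eq, hlen]; omega)
      fun x hx => ((perm_sortedWord_iff.1 hperm).1 x hx).1
  calc N3 a b c ≠ 0
    _ ↔ ∃ w : List ℕ, w.Perm (sortedWord a b c) ∧ DownUpAlt w :=
      N3_ne_zero_iff_exists_perm.trans <| exists_congr fun _ =>
        and_congr_right fun hperm => and_iff_left_of_imp (hhead hperm)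
    _ ↔ ∀ x, (sortedWord a b c).count x ≤ n := exists_perm_downUpAlt_iff hlen
    _ ↔ a ≤ n ∧ b ≤ n ∧ c ≤ n := by
      obtain ⟨-, h₁, h₂, h₃⟩ := perm_sortedWord_iff.1 (List.Perm.refl (sortedWord a b c))
      refine ⟨fun hx => ⟨h₁ ▸ hx 1, h₂ ▸ hx 2, h₃ ▸ hx 3⟩, fun hle x => ?_⟩
      simp only [sortedWord, List.count_append, List.count_replicate, beq_iff_eq]
      split_ifs <;> omega

lemma card_triples_sum_eq (n : ℕ) :
    Nat.card {t : ℕ × ℕ × ℕ // t.1 + t.2.1 + t.2.2 = n} = (n + 2).choose 2 := by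
  let e : ℕ × ℕ × ℕ ≃ (Fin 3 → ℕ) :=
    { toFun := fun t => ![t.1, t.2.1, t.2.2]
      invFun := fun f => (f 0, f 1, f 2)
      left_inv := fun _ => rfl
      right_inv := fun f => by ext i; fin_cases i <;> rfl }
  calc Nat.card {t : ℕ × ℕ × ℕ // t.1 + t.2.1 + t.2.2 = n}
    _ = Nat.card {f : Fin 3 → ℕ // ∑ i, f i = n} :=
      Nat.card_congr (e.subtypeEquiv fun t => by rw [Fin.sum_univ_three]; rfl)
    _ = Nat.card (Sym (Fin 3) n) := Nat.card_congr (Sym.equivNatSumOfFintype (Fin 3) n).symm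
    _ = (n + 2).choose 2 := by
      rw [Nat.card_eq_fintype_card, Sym.card_sym_eq_choose, Fintype.card_fin,
        show 3 + n - 1 = n + 2 by omega, Nat.choose_symm_add]

lemma card_triples_le_eq_card_triples_sum (n : ℕ) :
    Nat.card {t : ℕ × ℕ × ℕ // t.1 + t.2.1 + t.2.2 = 2 * n ∧ t.1 ≤ n ∧ t.2.1 ≤ n ∧ t.2.2 ≤ n} =
      Nat.card {t : ℕ × ℕ × ℕ // t.1 + t.2.1 + t.2.2 = n} :=
  Nat.card_congr
    { toFun := fun ⟨(a, b, c), h⟩ => ⟨(n - a, n - b, n - c), by grind⟩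
      invFun := fun ⟨(a, b, c), h⟩ => ⟨(n - a, n - b, n - c), by grind⟩
      left_inv := by rintro ⟨⟨a, b, c⟩, h⟩; grind
      right_inv := by rintro ⟨⟨a, b, c⟩, h⟩; grind }

theorem stmt18 (n : ℕ) (hn : 1 ≤ n) :
    Nat.card {t : ℕ × ℕ × ℕ //
      t.1 + t.2.1 + t.2.2 = 2 * n ∧ N3 t.1 t.2.1 t.2.2 ≠ 0} =
      Nat.choose (n + 2) 2 := by
  calc Nat.card {t : ℕ × ℕ × ℕ // t.1 + t.2.1 + t.2.2 = 2 * n ∧ N3 t.1 t.2.1 t.2.2 ≠ 0}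
    _ = Nat.card {t : ℕ × ℕ × ℕ //
          t.1 + t.2.1 + t.2.2 = 2 * n ∧ t.1 ≤ n ∧ t.2.1 ≤ n ∧ t.2.2 ≤ n} :=
      Nat.card_congr (Equiv.subtypeEquivRight fun _ => and_congr_right N3_ne_zero_iff)
    _ = Nat.card {t : ℕ × ℕ × ℕ // t.1 + t.2.1 + t.2.2 = n} := card_triples_le_eq_card_triples_sum n
    _ = Nat.choose (n + 2) 2 := card_triples_sum_eq n
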